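/- arXiv:2301.06086 — 2 statements merged into one kernel-verified Lean document; each statement's English description precedes it below -/
import Mathlib

section
/- Let n and m be positive integers and u : ℕ × ℕ → ℝ any function defined for k + t ≤ m. Define F(n, l) = u(m - l, l) for all l ∈ {0,…,m}, and for i from n-1 down to 1 define F(i, l) = max over k ∈ {0,…,m-l} of min( u(k, l), F(i+1, l + k) ). Then F(1, 0) equals the maximum, over all vectors (k_1,…,k_n) of nonnegative integers with k_1 + … + k_n = m, of the minimum over i ∈ {1,…,n} of u(k_i, k_1 + … + k_{i-1}). -/
/-- A sum over the predecessors of `i.succ` splits off the term at `0`. -/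
theorem Fin.sum_Iio_succ_eq_add {M : Type*} [AddCommMonoid M] {d : ℕ} (k : Fin (d + 1) → M)
    (i : Fin d) :
    ∑ j ∈ Finset.Iio i.succ, k j = k 0 + ∑ j ∈ Finset.Iio i, k j.succ := by
  have h : ∀ (N : ℕ) (a : Fin N) (f : Fin N → M),
      ∑ j ∈ Finset.Iio a, f j = ∑ j, if j < a then f j else 0 := fun N a f => by
    rw [← Finset.sum_filter]
    congr 1
    ext j
    simp
  rw [h, h, Fin.sum_univ_succ]
  simp

/-- The infimum over `Fin (d + 2)` is the minimum of the value at `0` and the infimum over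
the successors. -/
theorem Fin.inf'_univ_succ {α : Type*} [LinearOrder α] {d : ℕ} (f : Fin (d + 2) → α) :
    Finset.univ.inf' Finset.univ_nonempty f =
      min (f 0) (Finset.univ.inf' Finset.univ_nonempty fun i : Fin (d + 1) => f i.succ) := by
  refine eq_of_forall_le_iff fun c => ?_
  simp [Fin.forall_fin_succ (n := d + 1)]

/-- The dynamic programming table started at stage `0` with `l` items already picked gives the
optimum over all ways for `d + 1` agents to pick the remaining `m - l` items. -/
theorem isGreatest_egalitarian_of_recurrence (m : ℕ) (u : ℕ → ℕ → ℝ) (d : ℕ) (F : ℕ → ℕ → ℝ)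
    (hbase : ∀ l ≤ m, F d l = u (m - l) l)
    (hstep : ∀ i l : ℕ, i < d → l ≤ m →
      IsGreatest {x : ℝ | ∃ k ≤ m - l, x = min (u k l) (F (i + 1) (l + k))} (F i l))
    (l : ℕ) (hl : l ≤ m) :
    IsGreatest {x : ℝ | ∃ k : Fin (d + 1) → ℕ, (∑ i, k i = m - l) ∧
      x = Finset.univ.inf' Finset.univ_nonempty
        (fun i : Fin (d + 1) => u (k i) (l + ∑ j ∈ Finset.Iio i, k j))} (F 0 l) := by
  induction d generalizing F l with
  | zero =>
    have h0 : Finset.Iio (0 : Fin 1) = ∅ := rfl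
    constructor
    · exact ⟨fun _ => m - l, by simp, by simp [hbase l hl]⟩
    · rintro x ⟨k, hk, rfl⟩
      have hk0 : k 0 = m - l := by simpa using hk
      simp [hbase l hl, h0, hk0]
  | succ d ih =>
    have ih' := ih (fun i => F (i + 1)) hbase fun i l hi hl => hstep (i + 1) l (by omega) hl
    have h0 : Finset.Iio (0 : Fin (d + 2)) = ∅ := Finset.Iio_bot
    obtain ⟨⟨a, ha, hFa⟩, hmax⟩ := hstep 0 l (by omega) hl
    constructor
    · obtain ⟨⟨k, hk, hFk⟩, -⟩ := ih' (l + a) (by omega)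
      refine ⟨Fin.cons a k, ?_, ?_⟩
      · rw [Fin.sum_univ_succ]
        simp only [Fin.cons_zero, Fin.cons_succ, hk]
        omega
      · rw [hFa, Fin.inf'_univ_succ]
        simp only [Fin.sum_Iio_succ_eq_add, Fin.cons_zero, Fin.cons_succ, h0, Finset.sum_empty,
          add_zero, ← add_assoc]
        exact congrArg _ hFk
    · rintro x ⟨k, hk, rfl⟩
      rw [Fin.sum_univ_succ] at hk
      refine le_trans ?_ (hmax ⟨k 0, by omega, rfl⟩)
      rw [Fin.inf'_univ_succ]
      simp only [Fin.sum_Iio_succ_eq_add, h0, Finset.sum_empty, add_zero, ← add_assoc]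
      exact min_le_min le_rfl
        ((ih' (l + k 0) (by omega)).2 ⟨fun i => k i.succ, by dsimp only; omega, rfl⟩)

/-- Dynamic programming for egalitarian social welfare.  Let `u k t` be any function (defined
for `k + t ≤ m`), and let `F` satisfy the base case `F n l = u (m - l) l` and, for
`1 ≤ i < n`, the recurrence making `F i l` the maximum over `k ∈ {0,…,m-l}` of
`min (u k l) (F (i+1) (l+k))`.  Then `F 1 0` is the maximum, over all vectors `(k_1,…,k_n)`
of nonnegative integers summing to `m`, of `min_i u (k_i) (k_1 + ⋯ + k_{i-1})`. -/
theorem dp_egalitarian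
    (n m : ℕ) (hn : 0 < n) (hm : 0 < m) (u : ℕ → ℕ → ℝ) (F : ℕ → ℕ → ℝ)
    (hbase : ∀ l ≤ m, F n l = u (m - l) l)
    (hstep : ∀ i l : ℕ, 1 ≤ i → i < n → l ≤ m →
      IsGreatest {x : ℝ | ∃ k ≤ m - l, x = min (u k l) (F (i + 1) (l + k))} (F i l)) :
    IsGreatest {x : ℝ | ∃ k : Fin n → ℕ, (∑ i, k i = m) ∧
      x = Finset.univ.inf' (Finset.univ_nonempty_iff.mpr ⟨⟨0, hn⟩⟩)
        (fun i : Fin n => u (k i) (∑ j ∈ Finset.Iio i, k j))} (F 1 0) := by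
  obtain ⟨d, rfl⟩ : ∃ d, n = d + 1 := ⟨n - 1, by omega⟩
  simpa using isGreatest_egalitarian_of_recurrence m u d (fun i => F (i + 1)) hbase
    (fun i l hi hl => hstep (i + 1) l (by omega) (by omega) hl) 0 (Nat.zero_le m)
end

section
/- Let n ≥ 2 and d ≥ 1 be integers, m = d·n, and s = (s_1,…,s_m) a scoring vector with all entries strictly positive. Then there exists a preference profile P for n agents over m items such that, for the non-interleaving picking sequence k = (d, d, …, d), both of the following hold, where π ranges over all permutations of the n agents and P_π permutes the agents' rankings according to π: (i) ( Σ_{j=d+1}^{2d} s_j ) / ( Σ_{j=(n-1)d+1}^{m} s_j ) ≤ ( max_{π} SW^e_{P_π}(k) ) / ( min_{π} SW^e_{P_π}(k) ) ≤ ( Σ_{j=1}^{d} s_j ) / ( Σ_{j=(n-1)d+1}^{m} s_j ); and (ii) ( (Σ_{j=1}^{d} s_j)^{n-1} · Σ_{j=d+1}^{2d} s_j ) / ( Π_{i=1}^{n} Σ_{j=(i-1)d+1}^{id} s_j ) ≤ ( max_{π} SW^n_{P_π}(k) ) / ( min_{π} SW^n_{P_π}(k) ) ≤ ( Σ_{j=1}^{d}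 s_j )^{n} / ( Π_{i=1}^{n} Σ_{j=(i-1)d+1}^{id} s_j ). -/
/-- The `k` most preferred items of `S` under the ranking `σ` (where `σ r` is the item of
0-based rank `r`, so `σ.symm x` is the rank of item `x`): the items of `S` having fewer
than `k` strictly better items inside `S`. -/
def topk {m : ℕ} (σ : Fin m ≃ Fin m) (S : Finset (Fin m)) (k : ℕ) : Finset (Fin m) :=
  S.filter fun x => (S.filter fun y => σ.symm y < σ.symm x).card < k

/-- Items remaining before the `i`-th agent (0-based) picks, under profile `P` (agent `i`
has ranking `P i`) and pick-count vector `k` (agent `i` picks `k i` items). -/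
def remaining {m : ℕ} (P : ℕ → Fin m ≃ Fin m) (k : ℕ → ℕ) : ℕ → Finset (Fin m)
  | 0 => Finset.univ
  | i + 1 => remaining P k i \ topk (P i) (remaining P k i) (k i)

/-- The set of items greedily picked by the `i`-th agent (0-based). -/
def alloc {m : ℕ} (P : ℕ → Fin m ≃ Fin m) (k : ℕ → ℕ) (i : ℕ) : Finset (Fin m) :=
  topk (P i) (remaining P k i) (k i)

/-- The utility of the `i`-th agent (0-based): the sum of the scores `s r` over the
1-based ranks `r` (in her own ranking) of the items she receives. -/
noncomputable def util {m : ℕ} (s : ℕ → ℝ) (P : ℕ → Fin m ≃ Fin m) (k : ℕ → ℕ)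
    (i : ℕ) : ℝ :=
  ∑ x ∈ alloc P k i, s (((P i).symm x : ℕ) + 1)

/-- Permute the agents' rankings: agent at position `i` (0-based, `i < n`) gets the ranking
of agent `π i`. -/
def permProfile {m : ℕ} (n : ℕ) (P : ℕ → Fin m ≃ Fin m) (π : Equiv.Perm (Fin n)) :
    ℕ → Fin m ≃ Fin m :=
  fun i => if h : i < n then P ((π ⟨i, h⟩ : Fin n) : ℕ) else P i

/-- Egalitarian social welfare of the non-interleaving picking sequence `(d,…,d)` for `n`
agents (`n ≠ 0`). -/
noncomputable def SWe {m : ℕ} (n d : ℕ) (hn : n ≠ 0) (s : ℕ → ℝ)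
    (P : ℕ → Fin m ≃ Fin m) : ℝ :=
  (Finset.range n).inf' (Finset.nonempty_range_iff.mpr hn)
    (fun i => util s P (fun _ => d) i)

/-- Nash social welfare of the non-interleaving picking sequence `(d,…,d)` for `n`
agents. -/
noncomputable def SWn {m : ℕ} (n d : ℕ) (s : ℕ → ℝ) (P : ℕ → Fin m ≃ Fin m) : ℝ :=
  ∏ i ∈ Finset.range n, util s P (fun _ => d) i

open Finset

/-- Number of items of `S` strictly preferred to `x` under `σ`. -/
def betterCount {m : ℕ} (σ : Fin m ≃ Fin m) (S : Finset (Fin m)) (x : Fin m) : ℕ :=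
  (S.filter fun y => σ.symm y < σ.symm x).card

theorem mem_topk {m : ℕ} {σ : Fin m ≃ Fin m} {S : Finset (Fin m)} {k : ℕ} {x : Fin m} :
    x ∈ topk σ S k ↔ x ∈ S ∧ betterCount σ S x < k := by
  simp [topk, betterCount]

theorem betterCount_lt {m : ℕ} (σ : Fin m ≃ Fin m) (S : Finset (Fin m)) {x y : Fin m}
    (hx : x ∈ S) (h : σ.symm x < σ.symm y) : betterCount σ S x < betterCount σ S y := by
  apply card_lt_card
  refine ⟨fun z hz => ?_, fun hsub => ?_⟩
  · rw [mem_filter] at hz ⊢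
    exact ⟨hz.1, hz.2.trans h⟩
  · have := hsub (mem_filter.2 ⟨hx, h⟩)
    exact lt_irrefl _ (mem_filter.1 this).2

theorem betterCount_injOn {m : ℕ} (σ : Fin m ≃ Fin m) (S : Finset (Fin m)) :
    Set.InjOn (betterCount σ S) S := by
  intro x hx y hy h
  rcases lt_trichotomy (σ.symm x) (σ.symm y) with h1 | h1 | h1
  · exact absurd h (betterCount_lt σ S hx h1).ne
  · exact σ.symm.injective h1
  · exact absurd h (betterCount_lt σ S hy h1).ne'

theorem image_betterCount {m : ℕ} (σ : Fin m ≃ Fin m) (S : Finset (Fin m)) :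
    S.image (betterCount σ S) = range S.card := by
  apply eq_of_subset_of_card_le
  · intro c hc
    obtain ⟨x, hx, rfl⟩ := mem_image.1 hc
    exact mem_range.2 (card_lt_card (filter_ssubset.2 ⟨x, hx, lt_irrefl _⟩))
  · rw [card_range, card_image_of_injOn (betterCount_injOn σ S)]

theorem image_betterCount_topk {m : ℕ} (σ : Fin m ≃ Fin m) (S : Finset (Fin m)) {k : ℕ}
    (hk : k ≤ S.card) : (topk σ S k).image (betterCount σ S) = range k := by
  ext c
  simp only [mem_image, mem_topk, mem_range]
  constructor
  · rintro ⟨x, hx, rfl⟩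
    exact hx.2
  · intro hc
    have : c ∈ S.image (betterCount σ S) := by
      rw [image_betterCount]
      exact mem_range.2 (hc.trans_le hk)
    obtain ⟨x, hx, rfl⟩ := mem_image.1 this
    exact ⟨x, ⟨hx, hc⟩, rfl⟩

theorem topk_subset {m : ℕ} (σ : Fin m ≃ Fin m) (S : Finset (Fin m)) (k : ℕ) :
    topk σ S k ⊆ S := filter_subset _ _

theorem sum_topk_betterCount {m : ℕ} (σ : Fin m ≃ Fin m) (S : Finset (Fin m)) {k : ℕ}
    (hk : k ≤ S.card) (f : ℕ → ℝ) :
    ∑ x ∈ topk σ S k, f (betterCount σ S x) = ∑ c ∈ range k, f c := by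
  rw [← image_betterCount_topk σ S hk, sum_image]
  exact (betterCount_injOn σ S).mono (topk_subset σ S k)

theorem card_topk {m : ℕ} (σ : Fin m ≃ Fin m) (S : Finset (Fin m)) {k : ℕ}
    (hk : k ≤ S.card) : (topk σ S k).card = k := by
  rw [← card_image_of_injOn ((betterCount_injOn σ S).mono (topk_subset σ S k)),
    image_betterCount_topk σ S hk, card_range]

theorem card_filter_rank_lt {m : ℕ} (σ : Fin m ≃ Fin m) (x : Fin m) :
    (univ.filter fun y => σ.symm y < σ.symm x).card = (σ.symm x : ℕ) := by
  rw [← card_map σ.symm.toEmbedding]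
  have : (univ.filter fun y => σ.symm y < σ.symm x).map σ.symm.toEmbedding
      = Finset.Iio (σ.symm x) := by
    ext y
    simp
  rw [this, Fin.card_Iio]

theorem betterCount_le_rank {m : ℕ} (σ : Fin m ≃ Fin m) (S : Finset (Fin m)) (x : Fin m) :
    betterCount σ S x ≤ (σ.symm x : ℕ) := by
  rw [← card_filter_rank_lt]
  exact card_le_card (filter_subset_filter _ (subset_univ S))

theorem rank_le_betterCount_add {m : ℕ} (σ : Fin m ≃ Fin m) (S : Finset (Fin m)) (x : Fin m) :
    (σ.symm x : ℕ) ≤ Sᶜ.card + betterCount σ S x := by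
  rw [← card_filter_rank_lt, betterCount]
  refine le_trans (card_le_card fun y hy => ?_) (card_union_le _ _)
  rw [mem_union, mem_compl, mem_filter]
  by_cases h : y ∈ S
  · exact Or.inr ⟨h, (mem_filter.1 hy).2⟩
  · exact Or.inl h

theorem block_end_le (d : ℕ) {n i : ℕ} (hi : i < n) : (i + 1) * d ≤ d * n := by
  rw [mul_comm d]
  exact Nat.mul_le_mul_right d hi

theorem card_remaining {n d : ℕ} (Q : ℕ → Fin (d * n) ≃ Fin (d * n)) {i : ℕ} (hi : i ≤ n) :
    (remaining Q (fun _ => d) i).card + i * d = d * n := by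
  induction i with
  | zero => simp [remaining]
  | succ i ih =>
    have h := ih (by omega)
    have hle := block_end_le d hi
    rw [add_mul, one_mul] at hle ⊢
    have hk : d ≤ (remaining Q (fun _ => d) i).card := by omega
    rw [remaining, card_sdiff_of_subset (topk_subset _ _ _), card_topk _ _ hk]
    omega

theorem le_card_remaining {n d : ℕ} (Q : ℕ → Fin (d * n) ≃ Fin (d * n)) {i : ℕ} (hi : i < n) :
    d ≤ (remaining Q (fun _ => d) i).card := by
  have h := card_remaining Q hi.le
  have hle := block_end_le d hi
  rw [add_mul, one_mul] at hle
  omega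

theorem sum_Icc_block (s : ℕ → ℝ) (d i : ℕ) :
    ∑ j ∈ Icc (i * d + 1) ((i + 1) * d), s j = ∑ c ∈ range d, s (i * d + c + 1) := by
  have : Icc (i * d + 1) ((i + 1) * d) = Ico (i * d + 1) (i * d + 1 + d) := by
    ext j
    simp only [mem_Icc, mem_Ico, add_mul, one_mul]
    omega
  rw [this, sum_Ico_eq_sum_range, Nat.add_sub_cancel_left]
  exact sum_congr rfl fun c _ => by rw [add_right_comm]

theorem util_le_first_block {n d : ℕ} {s : ℕ → ℝ}
    (hmono : ∀ i j : ℕ, 1 ≤ i → i ≤ j → j ≤ d * n → s j ≤ s i)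
    (Q : ℕ → Fin (d * n) ≃ Fin (d * n)) {i : ℕ} (hi : i < n) :
    util s Q (fun _ => d) i ≤ ∑ j ∈ Icc 1 d, s j := by
  have h0 := sum_Icc_block s d 0
  simp only [zero_mul, zero_add, one_mul] at h0
  rw [h0, ← sum_topk_betterCount (Q i) _ (le_card_remaining Q hi) (fun c => s (c + 1))]
  refine sum_le_sum fun x _ => hmono _ _ (by omega) ?_ ((Q i).symm x).isLt
  exact Nat.succ_le_succ (betterCount_le_rank _ _ _)

theorem block_le_util {n d : ℕ} {s : ℕ → ℝ}
    (hmono : ∀ i j : ℕ, 1 ≤ i → i ≤ j → j ≤ d * n → s j ≤ s i)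
    (Q : ℕ → Fin (d * n) ≃ Fin (d * n)) {i : ℕ} (hi : i < n) :
    ∑ j ∈ Icc (i * d + 1) ((i + 1) * d), s j ≤ util s Q (fun _ => d) i := by
  rw [sum_Icc_block,
    ← sum_topk_betterCount (Q i) _ (le_card_remaining Q hi) (fun c => s (i * d + c + 1))]
  have hc : (remaining Q (fun _ => d) i)ᶜ.card = i * d := by
    have := card_remaining Q hi.le
    rw [card_compl, Fintype.card_fin]
    omega
  refine sum_le_sum fun x hx => hmono _ _ (by omega) ?_ ?_
  · have := rank_le_betterCount_add (Q i) (remaining Q (fun _ => d) i) x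
    omega
  · have h1 := (mem_topk.1 hx).2
    have hle := block_end_le d hi
    rw [add_mul, one_mul] at hle
    omega

/-- Items as pairs (block, position within the block). -/
def blockEquiv (n d : ℕ) : Fin n × Fin d ≃ Fin (d * n) :=
  finProdFinEquiv.trans (finCongr (mul_comm n d))

theorem blockEquiv_val {n d : ℕ} (p : Fin n × Fin d) :
    (blockEquiv n d p : ℕ) = p.1 * d + p.2 := by
  simp [blockEquiv, finProdFinEquiv, mul_comm, add_comm]

/-- The ranking that lists whole blocks in the order `τ`. -/
def blockRanking {n : ℕ} (d : ℕ) (τ : Equiv.Perm (Fin n)) : Fin (d * n) ≃ Fin (d * n) :=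
  (blockEquiv n d).symm.trans ((τ.prodCongr (Equiv.refl _)).trans (blockEquiv n d))

theorem blockRanking_symm_blockEquiv {n d : ℕ} (τ : Equiv.Perm (Fin n)) (p : Fin n × Fin d) :
    ((blockRanking d τ).symm (blockEquiv n d p) : ℕ) = τ.symm p.1 * d + p.2 := by
  have : (blockRanking d τ).symm (blockEquiv n d p) = blockEquiv n d (τ.symm p.1, p.2) := by
    simp [blockRanking, Prod.map]
  rw [this, blockEquiv_val]

/-- The items of the blocks in `T`. -/
def blocks {n : ℕ} (d : ℕ) (T : Finset (Fin n)) : Finset (Fin (d * n)) :=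
  (T ×ˢ (univ : Finset (Fin d))).map (blockEquiv n d).toEmbedding

theorem blockEquiv_mem_blocks {n d : ℕ} {T : Finset (Fin n)} {p : Fin n × Fin d} :
    blockEquiv n d p ∈ blocks d T ↔ p.1 ∈ T := by
  simp [blocks]

theorem card_blocks {n d : ℕ} (T : Finset (Fin n)) : (blocks d T).card = T.card * d := by
  simp [blocks]

theorem topk_blocks {n d : ℕ} (τ : Equiv.Perm (Fin n)) {T : Finset (Fin n)} {b : Fin n}
    (hb : b ∈ T) (hmin : ∀ c ∈ T, τ.symm b ≤ τ.symm c) :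
    topk (blockRanking d τ) (blocks d T) d = blocks d {b} := by
  ext x
  obtain ⟨p, rfl⟩ := (blockEquiv n d).surjective x
  rw [mem_topk, blockEquiv_mem_blocks, blockEquiv_mem_blocks, mem_singleton]
  have key : (blocks d {b}).card = d := by simp [card_blocks]
  have lt_of_lt : ∀ q r : Fin n × Fin d, τ.symm q.1 < τ.symm r.1 →
      (blockRanking d τ).symm (blockEquiv n d q) < (blockRanking d τ).symm (blockEquiv n d r) := by
    intro q r h
    rw [Fin.lt_def, blockRanking_symm_blockEquiv, blockRanking_symm_blockEquiv]
    have h1 : ((τ.symm q.1 : ℕ) + 1) * d ≤ τ.symm r.1 * d := Nat.mul_le_mul_right d h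
    rw [add_mul, one_mul] at h1
    have := q.2.isLt
    omega
  constructor
  · rintro ⟨hT, hlt⟩
    by_contra hne
    have hlt' : τ.symm b < τ.symm p.1 :=
      lt_of_le_of_ne (hmin _ hT) fun h => hne (τ.symm.injective h).symm
    refine absurd hlt (not_lt.2 ?_)
    refine key.symm.le.trans (card_le_card fun y hy => ?_)
    obtain ⟨q, rfl⟩ := (blockEquiv n d).surjective y
    rw [blockEquiv_mem_blocks, mem_singleton] at hy
    rw [mem_filter, blockEquiv_mem_blocks]
    exact ⟨hy ▸ hb, lt_of_lt q p (hy ▸ hlt')⟩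
  · intro hp
    refine ⟨hp ▸ hb, ?_⟩
    refine (card_lt_card ⟨fun y hy => ?_, fun hsub => ?_⟩).trans_eq key
    · obtain ⟨q, rfl⟩ := (blockEquiv n d).surjective y
      rw [mem_filter, blockEquiv_mem_blocks] at hy
      rw [blockEquiv_mem_blocks, mem_singleton]
      by_contra hne
      exact lt_asymm hy.2 (lt_of_lt p q (hp ▸ lt_of_le_of_ne (hmin _ hy.1)
        fun h => hne (τ.symm.injective h).symm))
    · have := hsub (blockEquiv_mem_blocks.2 (mem_singleton.2 hp))
      exact lt_irrefl _ (mem_filter.1 this).2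

theorem sum_blocks_singleton {n d : ℕ} (s : ℕ → ℝ) (τ : Equiv.Perm (Fin n)) (b : Fin n) :
    ∑ x ∈ blocks d {b}, s (((blockRanking d τ).symm x : ℕ) + 1) =
      ∑ j ∈ Icc ((τ.symm b : ℕ) * d + 1) ((τ.symm b + 1) * d), s j := by
  rw [sum_Icc_block, blocks, sum_map, sum_product, sum_singleton, ← Fin.sum_univ_eq_sum_range
    (fun c => s (τ.symm b * d + c + 1))]
  refine sum_congr rfl fun c _ => ?_
  rw [Equiv.coe_toEmbedding, blockRanking_symm_blockEquiv]

/-- If position `i` holds the block ranking `σ i`, and `g i` is the best block for `σ i` among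
those different from `g j` for all `j < i`, then position `i` receives block `g i`. -/
theorem util_blockRanking {n d : ℕ} (s : ℕ → ℝ) {Q : ℕ → Fin (d * n) ≃ Fin (d * n)}
    {σ : Fin n → Equiv.Perm (Fin n)} (hQ : ∀ i : Fin n, Q i = blockRanking d (σ i))
    {g : Fin n → Fin n} (hg : Function.Injective g)
    (hmin : ∀ i b, (∀ j < i, g j ≠ b) → (σ i).symm (g i) ≤ (σ i).symm b) (i : Fin n) :
    util s Q (fun _ => d) i =
      ∑ j ∈ Icc (((σ i).symm (g i) : ℕ) * d + 1) (((σ i).symm (g i) + 1) * d), s j := by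
  have htop : ∀ i : Fin n,
      topk (Q i) (blocks d (univ.filter fun b => ∀ j : Fin n, j < (i : ℕ) → g j ≠ b)) d =
        blocks d {g i} := by
    intro i
    rw [hQ]
    refine topk_blocks _ ?_ fun c hc => hmin i c ?_
    · simp only [mem_filter, mem_univ, true_and]
      exact fun j hj h => (Fin.lt_def.2 hj).ne (hg h)
    · simp only [mem_filter, mem_univ, true_and] at hc
      exact fun j hj => hc j hj
  have hrem : ∀ i ≤ n, remaining Q (fun _ => d) i =
      blocks d (univ.filter fun b => ∀ j : Fin n, j < i → g j ≠ b) := by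
    intro i
    induction i with
    | zero =>
      intro _
      ext x
      obtain ⟨p, rfl⟩ := (blockEquiv n d).surjective x
      simp [remaining, blockEquiv_mem_blocks]
    | succ i ih =>
      intro hi
      rw [remaining, ih (by omega), htop ⟨i, hi⟩]
      ext x
      obtain ⟨p, rfl⟩ := (blockEquiv n d).surjective x
      simp only [mem_sdiff, blockEquiv_mem_blocks, mem_filter, mem_univ, true_and, mem_singleton]
      constructor
      · rintro ⟨h1, h2⟩ j hj h
        rcases Nat.lt_succ_iff_lt_or_eq.1 hj with h3 | h3
        · exact h1 j h3 h
        · have : j = ⟨i, hi⟩ := Fin.ext h3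
          exact h2 (this ▸ h.symm)
      · exact fun h => ⟨fun j hj => h j (by omega), fun h2 => h ⟨i, hi⟩ (by simp) h2.symm⟩
  rw [util, alloc, hrem i i.isLt.le, htop i, hQ i, sum_blocks_singleton]

/-- Block order of agent `i`: agent `0` ranks block `0` first and block `n - 1` second; agent
`i > 0` moves block `i - 1` to the front of the natural order. -/
def agentOrder {n : ℕ} (hn : 2 ≤ n) (i : Fin n) : Equiv.Perm (Fin n) :=
  if (i : ℕ) = 0 then Equiv.swap ⟨1, hn⟩ ⟨n - 1, by omega⟩
  else (Fin.cycleRange ⟨i - 1, by omega⟩).symm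

/-- The profile in which agent `i` ranks the blocks by `agentOrder hn i`. -/
def blockProfile {n : ℕ} (d : ℕ) (hn : 2 ≤ n) (i : ℕ) : Fin (d * n) ≃ Fin (d * n) :=
  if h : i < n then blockRanking d (agentOrder hn ⟨i, h⟩) else Equiv.refl _

theorem permProfile_blockProfile {n d : ℕ} (hn : 2 ≤ n) (π : Equiv.Perm (Fin n)) (i : Fin n) :
    permProfile n (blockProfile d hn) π i = blockRanking d (agentOrder hn (π i)) := by
  simp [permProfile, blockProfile]

theorem cycleRange_val {n : ℕ} (i j : Fin n) :
    (Fin.cycleRange i j : ℕ) =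
      if (j : ℕ) < i then (j : ℕ) + 1 else if (j : ℕ) = i then 0 else j := by
  obtain ⟨k, rfl⟩ : ∃ k, n = k + 1 := ⟨n - 1, by have := i.isLt; omega⟩
  rcases lt_trichotomy j i with h | h | h
  · rw [Fin.coe_cycleRange_of_lt h, if_pos (Fin.lt_def.1 h)]
  · subst h
    simp
  · rw [Fin.cycleRange_of_gt h, if_neg, if_neg]
    · have := Fin.lt_def.1 h
      omega
    · have := Fin.lt_def.1 h
      omega

theorem agentOrder_symm_val {n : ℕ} (hn : 2 ≤ n) (i b : Fin n) :
    ((agentOrder hn i).symm b : ℕ) =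
      if (i : ℕ) = 0 then
        if (b : ℕ) = 1 then n - 1 else if (b : ℕ) = n - 1 then 1 else b
      else if (b : ℕ) + 1 < i then (b : ℕ) + 1 else if (b : ℕ) + 1 = i then 0 else b := by
  unfold agentOrder
  split_ifs with h0 <;>
    simp only [Equiv.symm_swap, Equiv.swap_apply_def, Equiv.symm_symm, cycleRange_val,
      Fin.ext_iff] <;> split_ifs <;> first | rfl | omega

theorem util_permProfile_one {n d : ℕ} (hn : 2 ≤ n) (s : ℕ → ℝ) (i : Fin n) :
    util s (permProfile n (blockProfile d hn) 1) (fun _ => d) i =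
      ∑ j ∈ Icc ((i : ℕ) * d + 1) ((i + 1) * d), s j := by
  have hi : ((agentOrder hn i).symm i : ℕ) = i := by
    rw [agentOrder_symm_val]
    split_ifs <;> omega
  have h := util_blockRanking s (permProfile_blockProfile (d := d) hn 1) (g := id)
    Function.injective_id (fun i b hb => ?_) i
  · simpa only [id, Equiv.Perm.one_apply, hi] using h
  · have hib : (i : ℕ) ≤ b := by
      by_contra h
      exact hb b (Fin.lt_def.2 (not_le.1 h)) rfl
    have := i.isLt
    have := b.isLt
    rw [Fin.le_def, Equiv.Perm.one_apply, id, agentOrder_symm_val, agentOrder_symm_val]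
    split_ifs <;> omega

theorem util_permProfile_rev {n d : ℕ} (hn : 2 ≤ n) (s : ℕ → ℝ) (i : Fin n) :
    util s (permProfile n (blockProfile d hn) Fin.revPerm) (fun _ => d) i =
      if (i : ℕ) = n - 1 then ∑ j ∈ Icc (d + 1) (2 * d), s j else ∑ j ∈ Icc 1 d, s j := by
  let g : Fin n → Fin n := fun i =>
    if (i : ℕ) = n - 1 then i else ⟨n - 2 - i, by omega⟩
  have hgv : ∀ i, (g i : ℕ) = if (i : ℕ) = n - 1 then (i : ℕ) else n - 2 - i := fun i => by
    simp only [g]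
    split_ifs <;> rfl
  have hr : ∀ i : Fin n, ((agentOrder hn (Fin.rev i)).symm (g i) : ℕ) =
      if (i : ℕ) = n - 1 then 1 else 0 := fun i => by
    have := i.isLt
    rw [agentOrder_symm_val, hgv, Fin.val_rev]
    split_ifs <;> omega
  have h := util_blockRanking s (permProfile_blockProfile (d := d) hn Fin.revPerm) (g := g)
    (fun i j hij => ?_) (fun i b hb => ?_) i
  · rw [h, Fin.revPerm_apply, hr]
    split_ifs <;> simp [two_mul]
  · have h1 := congrArg Fin.val hij
    have := i.isLt
    have := j.isLt
    rw [hgv, hgv] at h1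
    apply Fin.ext
    split_ifs at h1 <;> omega
  · rw [Fin.le_def, Fin.revPerm_apply, hr]
    split_ifs with hi
    · have hbv : (b : ℕ) = n - 1 := by
        by_contra hne
        have := b.isLt
        refine hb ⟨n - 2 - b, by omega⟩ (Fin.lt_def.2 ?_) (Fin.ext ?_)
        · simp only
          omega
        · rw [hgv]
          simp only
          split_ifs <;> omega
      rw [agentOrder_symm_val, Fin.val_rev]
      split_ifs <;> omega
    · exact Nat.zero_le _

/-- Price of the assignment of agents to positions, egalitarian and Nash cases.  For
`n ≥ 2` agents, `m = d·n` items and a strictly positive scoring vector `s`, there is a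
preference profile `P` such that for the non-interleaving picking sequence `k = (d,…,d)`:
(i) `Σ_{j=d+1}^{2d} s_j / Σ_{j=(n-1)d+1}^{m} s_j ≤ max_π SW^e_{P_π}(k) / min_π SW^e_{P_π}(k)
     ≤ Σ_{j=1}^{d} s_j / Σ_{j=(n-1)d+1}^{m} s_j`, and
(ii) `(Σ_{j=1}^{d} s_j)^{n-1} · Σ_{j=d+1}^{2d} s_j / Π_{i=1}^{n} Σ_{j=(i-1)d+1}^{id} s_j
     ≤ max_π SW^n_{P_π}(k) / min_π SW^n_{P_π}(k)
     ≤ (Σ_{j=1}^{d} s_j)^n / Π_{i=1}^{n} Σ_{j=(i-1)d+1}^{id} s_j`. -/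
theorem price_of_assignment_egalitarian_nash
    (n d : ℕ) (hn : 2 ≤ n) (hd : 1 ≤ d) (s : ℕ → ℝ)
    (hmono : ∀ i j : ℕ, 1 ≤ i → i ≤ j → j ≤ d * n → s j ≤ s i)
    (hpos : ∀ j : ℕ, 1 ≤ j → j ≤ d * n → 0 < s j) :
    ∃ P : ℕ → Fin (d * n) ≃ Fin (d * n),
      ((∑ j ∈ Finset.Icc (d + 1) (2 * d), s j) /
            (∑ j ∈ Finset.Icc ((n - 1) * d + 1) (d * n), s j) ≤
          (Finset.univ.sup' Finset.univ_nonempty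
              (fun π : Equiv.Perm (Fin n) =>
                SWe n d (by omega) s (permProfile n P π))) /
            (Finset.univ.inf' Finset.univ_nonempty
              (fun π : Equiv.Perm (Fin n) =>
                SWe n d (by omega) s (permProfile n P π))) ∧
        (Finset.univ.sup' Finset.univ_nonempty
              (fun π : Equiv.Perm (Fin n) =>
                SWe n d (by omega) s (permProfile n P π))) /
            (Finset.univ.inf' Finset.univ_nonempty
              (fun π : Equiv.Perm (Fin n) =>
                SWe n d (by omega) s (permProfile n P π))) ≤
          (∑ j ∈ Finset.Icc 1 d, s j) /
            (∑ j ∈ Finset.Icc ((n - 1) * d + 1) (d * n), s j)) ∧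
      ((∑ j ∈ Finset.Icc 1 d, s j) ^ (n - 1) *
            (∑ j ∈ Finset.Icc (d + 1) (2 * d), s j) /
            (∏ i ∈ Finset.range n, ∑ j ∈ Finset.Icc (i * d + 1) ((i + 1) * d), s j) ≤
          (Finset.univ.sup' Finset.univ_nonempty
              (fun π : Equiv.Perm (Fin n) => SWn n d s (permProfile n P π))) /
            (Finset.univ.inf' Finset.univ_nonempty
              (fun π : Equiv.Perm (Fin n) => SWn n d s (permProfile n P π))) ∧
        (Finset.univ.sup' Finset.univ_nonempty
              (fun π : Equiv.Perm (Fin n) => SWn n d s (permProfile n P π))) /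
            (Finset.univ.inf' Finset.univ_nonempty
              (fun π : Equiv.Perm (Fin n) => SWn n d s (permProfile n P π))) ≤
          (∑ j ∈ Finset.Icc 1 d, s j) ^ n /
            (∏ i ∈ Finset.range n, ∑ j ∈ Finset.Icc (i * d + 1) ((i + 1) * d), s j)) := by
  have hblock : ∀ i < n, 0 < ∑ j ∈ Icc (i * d + 1) ((i + 1) * d), s j := fun i hi => by
    have hle := block_end_le d hi
    refine sum_pos (fun j hj => ?_) (nonempty_Icc.2 (by rw [add_mul]; omega))
    rw [mem_Icc] at hj
    exact hpos j (by omega) (by omega)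
  have hlast : ∑ j ∈ Icc ((n - 1) * d + 1) (d * n), s j =
      ∑ j ∈ Icc ((n - 1) * d + 1) ((n - 1 + 1) * d), s j := by
    rw [Nat.sub_add_cancel (by omega), mul_comm d]
  have hlastpos : 0 < ∑ j ∈ Icc ((n - 1) * d + 1) (d * n), s j :=
    hlast ▸ hblock (n - 1) (by omega)
  have hsecond : 0 < ∑ j ∈ Icc (d + 1) (2 * d), s j := by
    simpa using hblock 1 (by omega)
  have hprod : 0 < ∏ i ∈ range n, ∑ j ∈ Icc (i * d + 1) ((i + 1) * d), s j :=
    prod_pos fun i hi => hblock i (mem_range.1 hi)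
  have hanti : ∀ i k : ℕ, i ≤ k → k < n →
      ∑ j ∈ Icc (k * d + 1) ((k + 1) * d), s j ≤ ∑ j ∈ Icc (i * d + 1) ((i + 1) * d), s j := by
    intro i k hik hk
    rw [sum_Icc_block, sum_Icc_block]
    refine sum_le_sum fun c hc => hmono _ _ (by omega) ?_ ?_
    · have := Nat.mul_le_mul_right d hik
      omega
    · have hle := block_end_le d hk
      rw [add_mul, one_mul] at hle
      have := mem_range.1 hc
      omega
  have hsecond_le : ∑ j ∈ Icc (d + 1) (2 * d), s j ≤ ∑ j ∈ Icc 1 d, s j := by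
    simpa using hanti 0 1 (by omega) (by omega)
  have hE_lb : ∀ Q : ℕ → Fin (d * n) ≃ Fin (d * n),
      ∑ j ∈ Icc ((n - 1) * d + 1) (d * n), s j ≤ SWe n d (by omega) s Q := fun Q =>
    le_inf' _ _ fun i hi => hlast.trans_le
      ((hanti i (n - 1) (by have := mem_range.1 hi; omega) (by omega)).trans
        (block_le_util hmono Q (mem_range.1 hi)))
  have hE_ub : ∀ Q : ℕ → Fin (d * n) ≃ Fin (d * n),
      SWe n d (by omega) s Q ≤ ∑ j ∈ Icc 1 d, s j := fun Q =>
    (inf'_le _ (mem_range.2 (by omega : 0 < n))).trans (util_le_first_block hmono Q (by omega))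
  have hE_one : SWe n d (by omega) s (permProfile n (blockProfile d hn) 1) ≤
      ∑ j ∈ Icc ((n - 1) * d + 1) (d * n), s j :=
    (inf'_le _ (mem_range.2 (by omega : n - 1 < n))).trans_eq
      ((util_permProfile_one hn s ⟨n - 1, by omega⟩).trans hlast.symm)
  have hE_rev : ∑ j ∈ Icc (d + 1) (2 * d), s j ≤
      SWe n d (by omega) s (permProfile n (blockProfile d hn) Fin.revPerm) := by
    refine le_inf' _ _ fun i hi => ?_
    rw [util_permProfile_rev hn s ⟨i, mem_range.1 hi⟩]
    split_ifs
    exacts [le_rfl, hsecond_le]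
  have hN_lb : ∀ Q : ℕ → Fin (d * n) ≃ Fin (d * n),
      ∏ i ∈ range n, ∑ j ∈ Icc (i * d + 1) ((i + 1) * d), s j ≤ SWn n d s Q := fun Q =>
    prod_le_prod (fun i hi => (hblock i (mem_range.1 hi)).le)
      fun i hi => block_le_util hmono Q (mem_range.1 hi)
  have hN_ub : ∀ Q : ℕ → Fin (d * n) ≃ Fin (d * n),
      SWn n d s Q ≤ (∑ j ∈ Icc 1 d, s j) ^ n := fun Q => by
    have h := prod_le_prod (s := range n)
      (fun i hi => (hblock i (mem_range.1 hi)).le.trans (block_le_util hmono Q (mem_range.1 hi)))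
      fun i hi => util_le_first_block hmono Q (mem_range.1 hi)
    rwa [prod_const, card_range] at h
  have hN_one : SWn n d s (permProfile n (blockProfile d hn) 1) ≤
      ∏ i ∈ range n, ∑ j ∈ Icc (i * d + 1) ((i + 1) * d), s j :=
    (prod_congr rfl fun i hi => util_permProfile_one hn s ⟨i, mem_range.1 hi⟩).le
  have hN_rev : (∑ j ∈ Icc 1 d, s j) ^ (n - 1) * ∑ j ∈ Icc (d + 1) (2 * d), s j ≤
      SWn n d s (permProfile n (blockProfile d hn) Fin.revPerm) := by
    have h : ∀ i ∈ range n, util s (permProfile n (blockProfile d hn) Fin.revPerm) (fun _ => d) i =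
        if i = n - 1 then ∑ j ∈ Icc (d + 1) (2 * d), s j else ∑ j ∈ Icc 1 d, s j :=
      fun i hi => util_permProfile_rev hn s ⟨i, mem_range.1 hi⟩
    have hrange : range n = range (n - 1 + 1) := by rw [Nat.sub_add_cancel (by omega)]
    rw [SWn, prod_congr rfl h, hrange, prod_range_succ, if_pos rfl,
      prod_congr rfl fun i hi => if_neg (mem_range.1 hi).ne, prod_const, card_range]
  have hfirst : 0 < ∑ j ∈ Icc 1 d, s j := hsecond.trans_le hsecond_le
  refine ⟨blockProfile d hn, ⟨?_, ?_⟩, ?_, ?_⟩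
  · have hsup := hE_rev.trans (le_sup' (fun π : Equiv.Perm (Fin n) =>
      SWe n d (by omega) s (permProfile n (blockProfile d hn) π)) (mem_univ Fin.revPerm))
    exact div_le_div₀ (hsecond.le.trans hsup) hsup
      (hlastpos.trans_le (le_inf' _ _ fun π _ => hE_lb _)) ((inf'_le _ (mem_univ 1)).trans hE_one)
  · exact div_le_div₀ hfirst.le (sup'_le _ _ fun π _ => hE_ub _) hlastpos
      (le_inf' _ _ fun π _ => hE_lb _)
  · have hsup := hN_rev.trans (le_sup' (fun π : Equiv.Perm (Fin n) =>
      SWn n d s (permProfile n (blockProfile d hn) π)) (mem_univ Fin.revPerm))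
    exact div_le_div₀ ((mul_pos (pow_pos hfirst _) hsecond).le.trans hsup) hsup
      (hprod.trans_le (le_inf' _ _ fun π _ => hN_lb _)) ((inf'_le _ (mem_univ 1)).trans hN_one)
  · exact div_le_div₀ (pow_pos hfirst _).le (sup'_le _ _ fun π _ => hN_ub _) hprod
      (le_inf' _ _ fun π _ => hN_lb _)
end
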